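/- arXiv:2510.27670 — 2 statements merged into one kernel-verified Lean document; each statement's English description precedes it below -/
import Mathlib

section
/- Let A₁, A₂, A₃ be hermitian 4×4 complex matrices whose joint numerical range W = W(A₁,A₂,A₃) has dimension 3. Suppose G₁, G₂, G₃ are three mutually distinct one-dimensional faces of W that have a point in common, and at least two of G₁, G₂, G₃ are exposed faces of W. Then G₁ ∩ G₂ ∩ G₃ is a singleton {p} and p is a corner point of W. -/
open Matrix ComplexOrder

noncomputable section

/-- A density matrix: positive semidefinite with unit trace. -/
def IsDensity {n : Type*} [Fintype n] (ρ : Matrix n n ℂ) : Prop :=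
  ρ.PosSemidef ∧ ρ.trace = 1

/-- The measurement map `ρ ↦ (tr ρA₁, …, tr ρA_k)` (the traces are real for
hermitian matrices). -/
def wpt {n : Type*} [Fintype n] {k : ℕ} (A : Fin k → Matrix n n ℂ)
    (ρ : Matrix n n ℂ) : Fin k → ℝ :=
  fun i => ((ρ * A i).trace).re

/-- The joint numerical range of `k` matrices. -/
def JNR {n : Type*} [Fintype n] {k : ℕ} (A : Fin k → Matrix n n ℂ) :
    Set (Fin k → ℝ) :=
  wpt A '' {ρ | IsDensity ρ}

/-- `F` is a face of the convex set `C`: a convex subset such that whenever an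
open segment between two points of `C` meets `F`, both endpoints lie in `F`. -/
def IsFaceOf {E : Type*} [AddCommGroup E] [Module ℝ E] (C F : Set E) : Prop :=
  Convex ℝ F ∧ IsExtreme ℝ C F

/-- The dimension of a convex set: the dimension of its affine hull. -/
def convDim {E : Type*} [AddCommGroup E] [Module ℝ E] (F : Set E) : ℕ :=
  Module.finrank ℝ (affineSpan ℝ F).direction

/-- Euclidean dot product on `Fin d → ℝ`. -/
def dotR {d : ℕ} (u v : Fin d → ℝ) : ℝ := ∑ i, u i * v i

/-- `F` is an exposed face of `C`: the set of minimizers of a linear functional. -/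
def IsExposedFace {d : ℕ} (C F : Set (Fin d → ℝ)) : Prop :=
  ∃ u : Fin d → ℝ, F = {x ∈ C | ∀ y ∈ C, dotR u x ≤ dotR u y}

/-- The normal cone of `C` at `p`. -/
def normalConeAt {d : ℕ} (C : Set (Fin d → ℝ)) (p : Fin d → ℝ) :
    Set (Fin d → ℝ) :=
  {u | ∀ y ∈ C, 0 ≤ dotR (y - p) u}

/-- `p` is a corner point of `C` if the normal cone of `C` at `p` spans `ℝ^d`. -/
def IsCornerPoint {d : ℕ} (C : Set (Fin d → ℝ)) (p : Fin d → ℝ) : Prop :=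
  p ∈ C ∧ Submodule.span ℝ (normalConeAt C p) = ⊤

/-- The closed unit disk of `ℝ²`. -/
def unitDisk2 : Set (Fin 2 → ℝ) := {v | v 0 ^ 2 + v 1 ^ 2 ≤ 1}

/-- An elliptic disk in `ℝ³`: the image of the closed unit disk of `ℝ²` under an
injective affine map. -/
def IsEllipticDisk (F : Set (Fin 3 → ℝ)) : Prop :=
  ∃ f : (Fin 2 → ℝ) →ᵃ[ℝ] (Fin 3 → ℝ), Function.Injective f ∧ F = f '' unitDisk2

/-- A non-elliptic face of `W`: a two-dimensional face that is not an elliptic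
disk. -/
def IsNonEllipticFace (W F : Set (Fin 3 → ℝ)) : Prop :=
  IsFaceOf W F ∧ convDim F = 2 ∧ ¬ IsEllipticDisk F

/-- A rank-3 face of the joint numerical range of `A`. -/
def IsRank3Face {k : ℕ} (A : Fin k → Matrix (Fin 4) (Fin 4) ℂ)
    (F : Set (Fin k → ℝ)) : Prop :=
  F.Nonempty ∧ IsFaceOf (JNR A) F ∧
    ∃ P : Matrix (Fin 4) (Fin 4) ℂ, Pᴴ = P ∧ P * P = P ∧ P.rank = 3 ∧
      ∀ ρ : Matrix (Fin 4) (Fin 4) ℂ, IsDensity ρ → (wpt A ρ ∈ F ↔ P * ρ * P = ρ)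

/-!
If a segment from `y ∈ C` to a point of a face of `C` can be prolonged inside `C`, then `y` lies in
the face. Hence no point of a proper face is interior, and a face contains every point of `C` in its
affine span, so that two distinct one-dimensional faces through `p` meet only in `p`.

Let `v₁, v₂, v₃` be directions of the three faces at `p`, the first two faces being exposed by
`u₁, u₂`, and let `u₃ ≠ 0` be a supporting functional that is constant on the third face. Then all
three `uᵢ` lie in the normal cone at `p`, and their pairings with the directions satisfy
`uᵢ(vᵢ) = 0` and `uᵢ(vⱼ) ≥ 0`, with strict inequality for `i ≤ 2` and `j ≠ i`. This sign pattern
makes `u₁, u₂, u₃` linearly independent.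
-/

section LinearIndependence

variable {𝕜 M N : Type*} [Field 𝕜] [LinearOrder 𝕜] [IsStrictOrderedRing 𝕜]
  [AddCommGroup M] [Module 𝕜 M] [AddCommGroup N] [Module 𝕜 N]

theorem linearIndependent_of_pairing_nonneg (B : M →ₗ[𝕜] N →ₗ[𝕜] 𝕜) {u₁ u₂ u₃ : M} {v₁ v₂ v₃ : N}
    (h₁₁ : B u₁ v₁ = 0) (h₂₂ : B u₂ v₂ = 0) (h₃₃ : B u₃ v₃ = 0)
    (h₁₂ : 0 < B u₁ v₂) (h₁₃ : 0 < B u₁ v₃) (h₂₁ : 0 < B u₂ v₁) (h₂₃ : 0 < B u₂ v₃)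
    (h₃₁ : 0 ≤ B u₃ v₁) (h₃₂ : 0 ≤ B u₃ v₂) (hu₃ : u₃ ≠ 0) :
    LinearIndependent 𝕜 ![u₁, u₂, u₃] := by
  rw [Fintype.linearIndependent_iff]
  intro c hc
  have hrel : c 0 • u₁ + c 1 • u₂ + c 2 • u₃ = 0 := by simpa [Fin.sum_univ_three] using hc
  have hpair (v : N) : c 0 * B u₁ v + c 1 * B u₂ v + c 2 * B u₃ v = 0 := by
    simpa using congrArg (B · v) hrel
  have hv₁ : c 1 * B u₂ v₁ = -(c 2 * B u₃ v₁) := by linear_combination hpair v₁ - c 0 * h₁₁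
  have hv₂ : c 0 * B u₁ v₂ = -(c 2 * B u₃ v₂) := by linear_combination hpair v₂ - c 1 * h₂₂
  have hv₃ : c 0 * B u₁ v₃ = -(c 1 * B u₂ v₃) := by linear_combination hpair v₃ - c 2 * h₃₃
  -- `hv₁` and `hv₂` force `c 0`, `c 1` to have the same sign, `hv₃` forces opposite signs.
  have hnonneg : 0 ≤ c 0 * c 1 := by
    refine nonneg_of_mul_nonneg_left ?_ (mul_pos h₁₂ h₂₁)
    calc 0 ≤ c 2 ^ 2 * (B u₃ v₂ * B u₃ v₁) := by positivity
      _ = (c 0 * B u₁ v₂) * (c 1 * B u₂ v₁) := by rw [hv₁, hv₂]; ring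
      _ = c 0 * c 1 * (B u₁ v₂ * B u₂ v₁) := by ring
  have hc₀ : c 0 = 0 := by
    have hle : c 0 ^ 2 * B u₁ v₃ ≤ 0 := by
      calc c 0 ^ 2 * B u₁ v₃ = -(c 0 * c 1 * B u₂ v₃) := by linear_combination c 0 * hv₃
        _ ≤ 0 := neg_nonpos.2 (mul_nonneg hnonneg h₂₃.le)
    exact pow_eq_zero_iff two_ne_zero |>.1
      ((nonpos_of_mul_nonpos_left hle h₁₃).antisymm (sq_nonneg _))
  have hc₁ : c 1 = 0 := by simpa [hc₀, h₂₃.ne'] using hv₃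
  have hc₂ : c 2 = 0 := by simpa [hc₀, hc₁, hu₃] using hrel
  simp [Fin.forall_fin_succ, hc₀, hc₁, hc₂]

end LinearIndependence

section Module

variable {E : Type*} [AddCommGroup E] [Module ℝ E] {C F G : Set E}

theorem convDim_pos_iff [FiniteDimensional ℝ E] : 0 < convDim F ↔ F.Nontrivial := by
  rw [convDim, direction_affineSpan, Nat.lt_iff_add_one_le, zero_add,
    Submodule.one_le_finrank_iff, ne_eq, vectorSpan_eq_bot_iff_subsingleton,
    Set.not_subsingleton_iff]

theorem IsFaceOf.inter (hF : IsFaceOf C F) (hG : IsFaceOf C G) : IsFaceOf C (F ∩ G) :=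
  ⟨hF.1.inter hG.1, hF.2.inter hG.2⟩

end Module

section TopologicalVectorSpace

variable {E : Type*} [AddCommGroup E] [Module ℝ E] [TopologicalSpace E]
  [IsTopologicalAddGroup E] [ContinuousSMul ℝ E] {C F s : Set E} {x y : E}

theorem exists_mem_openSegment_of_mem_intrinsicInterior (hx : x ∈ intrinsicInterior ℝ s)
    (hy : y ∈ affineSpan ℝ s) : ∃ z ∈ s, x ∈ openSegment ℝ y z := by
  obtain ⟨x, hx, rfl⟩ := hx
  let line : ℝ → affineSpan ℝ s := fun t ↦
    ⟨AffineMap.lineMap y (x : E) t, AffineMap.lineMap_mem t hy x.2⟩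
  have hline : Continuous line := AffineMap.lineMap_continuous.subtype_mk _
  have hline_one : line 1 = x := Subtype.ext (AffineMap.lineMap_apply_one _ _)
  have hnear : ∀ᶠ t in nhdsWithin 1 (Set.Ioi 1), (line t : E) ∈ s :=
    nhdsWithin_le_nhds <| hline.continuousAt.preimage_mem_nhds <|
      hline_one ▸ mem_interior_iff_mem_nhds.1 hx
  obtain ⟨t, hts, ht : 1 < t⟩ := (hnear.and self_mem_nhdsWithin).exists
  refine ⟨line t, hts, ?_⟩
  rw [openSegment_eq_image_lineMap]
  refine ⟨t⁻¹, ⟨by positivity, inv_lt_one_of_one_lt₀ ht⟩, ?_⟩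
  simp [line, AffineMap.lineMap_apply, smul_smul, (zero_lt_one.trans ht).ne']

theorem IsFaceOf.disjoint_interior (hF : IsFaceOf C F) (hne : F ≠ C) : Disjoint (interior C) F := by
  rw [Set.disjoint_left]
  intro x hxC hxF
  refine hne (hF.2.subset.antisymm fun y hy ↦ ?_)
  obtain ⟨z, hz, hxz⟩ := exists_mem_openSegment_of_mem_intrinsicInterior
    (interior_subset_intrinsicInterior hxC) (subset_affineSpan ℝ C hy)
  exact hF.2.left_mem_of_mem_openSegment hy hz hxF hxz

end TopologicalVectorSpace

section FiniteDimensional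

variable {E : Type*} [NormedAddCommGroup E] [NormedSpace ℝ E] [FiniteDimensional ℝ E]
  {C F G : Set E} {p : E}

theorem interior_nonempty_of_convDim_eq (hC : Convex ℝ C) (hne : C.Nonempty)
    (hdim : convDim C = Module.finrank ℝ E) : (interior C).Nonempty := by
  rw [hC.interior_nonempty_iff_affineSpan_eq_top,
    ← AffineSubspace.direction_eq_top_iff_of_nonempty ((affineSpan_nonempty ℝ).2 hne)]
  exact Submodule.eq_top_of_finrank_eq hdim

namespace IsFaceOf

theorem inter_affineSpan_subset (hF : IsFaceOf C F) : C ∩ affineSpan ℝ F ⊆ F := by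
  rintro y ⟨hyC, hyF⟩
  obtain ⟨x, hx⟩ := ((affineSpan_nonempty ℝ).1 ⟨y, hyF⟩).intrinsicInterior hF.1
  obtain ⟨z, hz, hxz⟩ := exists_mem_openSegment_of_mem_intrinsicInterior hx hyF
  exact hF.2.left_mem_of_mem_openSegment hyC (hF.2.subset hz) (intrinsicInterior_subset hx) hxz

theorem subset_of_convDim_le_inter (hF : IsFaceOf C F) (hG : IsFaceOf C G)
    (hne : (F ∩ G).Nonempty) (hdim : convDim F ≤ convDim (F ∩ G)) : F ⊆ G := by
  have hle : affineSpan ℝ (F ∩ G) ≤ affineSpan ℝ F := affineSpan_mono ℝ Set.inter_subset_left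
  have hspan : affineSpan ℝ (F ∩ G) = affineSpan ℝ F :=
    AffineSubspace.eq_of_direction_eq_of_nonempty_of_le
      (Submodule.eq_of_le_of_finrank_le (AffineSubspace.direction_le hle) hdim)
      ((affineSpan_nonempty ℝ).2 hne) hle
  intro y hy
  have hyspan : y ∈ affineSpan ℝ (F ∩ G) := hspan ▸ subset_affineSpan ℝ F hy
  exact ((hF.inter hG).inter_affineSpan_subset ⟨hF.2.subset hy, hyspan⟩).2

theorem inter_eq_singleton (hF : IsFaceOf C F) (hG : IsFaceOf C G) (hdF : convDim F = 1)
    (hdG : convDim G = 1) (hne : F ≠ G) (hp : p ∈ F ∩ G) : F ∩ G = {p} := by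
  refine (Set.subsingleton_iff_singleton hp).1 (Set.not_nontrivial_iff.1 fun hnt ↦ ?_)
  have hdim : 1 ≤ convDim (F ∩ G) := convDim_pos_iff.2 hnt
  have hFG : F ⊆ G := hF.subset_of_convDim_le_inter hG ⟨p, hp⟩ (hdF.trans_le hdim)
  have hGF : G ⊆ F := hG.subset_of_convDim_le_inter hF ⟨p, hp.symm⟩
    (hdG.trans_le (Set.inter_comm F G ▸ hdim))
  exact hne (hFG.antisymm hGF)

end IsFaceOf

end FiniteDimensional

section NormalCone

variable {d : ℕ} {C F : Set (Fin d → ℝ)} {p u : Fin d → ℝ}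

theorem dotR_eq_dotProduct (u v : Fin d → ℝ) : dotR u v = u ⬝ᵥ v := rfl

theorem mem_normalConeAt_iff : u ∈ normalConeAt C p ↔ ∀ y ∈ C, 0 ≤ u ⬝ᵥ (y - p) := by
  simp only [normalConeAt, Set.mem_ofPred_eq, dotR_eq_dotProduct, dotProduct_comm u]

theorem isCornerPoint_of_linearIndependent {u : Fin d → Fin d → ℝ} (hp : p ∈ C)
    (hu : LinearIndependent ℝ u) (hmem : ∀ i, u i ∈ normalConeAt C p) : IsCornerPoint C p := by
  have hspan : Submodule.span ℝ (Set.range u) = ⊤ := hu.span_eq_top_of_card_eq_finrank' (by simp)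
  exact ⟨hp, top_unique (hspan ▸ Submodule.span_mono (Set.range_subset_iff.2 hmem))⟩

theorem IsExposedFace.subset (hF : IsExposedFace C F) : F ⊆ C := by
  obtain ⟨u, rfl⟩ := hF
  exact Set.sep_subset _ _

theorem IsExposedFace.exists_mem_normalConeAt (hF : IsExposedFace C F) (hp : p ∈ F) :
    ∃ u ∈ normalConeAt C p, ∀ y ∈ C, y ∈ F ↔ u ⬝ᵥ (y - p) = 0 := by
  obtain ⟨u, rfl⟩ := hF
  have hnonneg : ∀ y ∈ C, 0 ≤ u ⬝ᵥ (y - p) := fun y hy ↦ by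
    rw [dotProduct_sub]
    exact sub_nonneg.2 (hp.2 y hy)
  refine ⟨u, mem_normalConeAt_iff.2 hnonneg, fun y hy ↦ ?_⟩
  rw [dotProduct_sub, sub_eq_zero]
  exact ⟨fun hyF ↦ le_antisymm (hyF.2 p hp.1) (hp.2 y hy),
    fun heq ↦ ⟨hy, fun z hz ↦ heq.trans_le (hp.2 z hz)⟩⟩

theorem IsFaceOf.exists_ne_zero_mem_normalConeAt (hF : IsFaceOf C F) (hC : Convex ℝ C)
    (hint : (interior C).Nonempty) (hne : F ≠ C) (hp : p ∈ F) :
    ∃ u ∈ normalConeAt C p, u ≠ 0 ∧ ∀ y ∈ F, u ⬝ᵥ (y - p) = 0 := by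
  obtain ⟨f, c, hf, hfC, hfF⟩ := geometric_hahn_banach_of_nonempty_interior hC hF.1
    (hF.disjoint_interior hne) hint ⟨p, hp⟩
  have hfc : ∀ y ∈ F, f y = c := fun y hy ↦ (hfC y (hF.2.subset hy)).antisymm (hfF y hy)
  obtain ⟨u, hu⟩ := (dotProductEquiv ℝ (Fin d)).surjective (-f : Module.Dual ℝ (Fin d → ℝ))
  have hdot : ∀ y, u ⬝ᵥ (y - p) = c - f y := fun y ↦ by
    calc u ⬝ᵥ (y - p) = -f (y - p) := LinearMap.congr_fun hu (y - p)
      _ = c - f y := by rw [map_sub, hfc p hp, neg_sub]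
  refine ⟨u, mem_normalConeAt_iff.2 fun y hy ↦ ?_, ?_, fun y hy ↦ ?_⟩
  · rw [hdot]
    exact sub_nonneg.2 (hfC y hy)
  · rintro rfl
    refine hf (ContinuousLinearMap.ext fun y ↦ ?_)
    simpa using (LinearMap.congr_fun hu y).symm
  · rw [hdot, hfc y hy, sub_self]

end NormalCone

theorem isCornerPoint_of_inter_eq_singleton {C G₁ G₂ G₃ : Set (Fin 3 → ℝ)} {p : Fin 3 → ℝ}
    (hC : Convex ℝ C) (hint : (interior C).Nonempty)
    (hG₁ : IsExposedFace C G₁) (hG₂ : IsExposedFace C G₂) (hG₃ : IsFaceOf C G₃)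
    (hn₁ : G₁.Nontrivial) (hn₂ : G₂.Nontrivial) (hn₃ : G₃.Nontrivial)
    (h₁₂ : G₁ ∩ G₂ = {p}) (h₁₃ : G₁ ∩ G₃ = {p}) (h₂₃ : G₂ ∩ G₃ = {p}) : IsCornerPoint C p := by
  have hp : p ∈ G₁ ∩ G₂ ∩ G₃ := ⟨h₁₂ ▸ rfl, (h₁₃ ▸ rfl : p ∈ G₁ ∩ G₃).2⟩
  obtain ⟨q₁, hq₁, hq₁p⟩ := hn₁.exists_ne p
  obtain ⟨q₂, hq₂, hq₂p⟩ := hn₂.exists_ne p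
  obtain ⟨q₃, hq₃, hq₃p⟩ := hn₃.exists_ne p
  have hC₁ : q₁ ∈ C := hG₁.subset hq₁
  have hC₂ : q₂ ∈ C := hG₂.subset hq₂
  have hC₃ : q₃ ∈ C := hG₃.2.subset hq₃
  have hG₃C : G₃ ≠ C := fun h ↦ hq₁p (h₁₃.subset ⟨hq₁, h ▸ hC₁⟩)
  obtain ⟨u₁, hu₁, hz₁⟩ := hG₁.exists_mem_normalConeAt hp.1.1
  obtain ⟨u₂, hu₂, hz₂⟩ := hG₂.exists_mem_normalConeAt hp.1.2
  obtain ⟨u₃, hu₃, hu₃0, hz₃⟩ := hG₃.exists_ne_zero_mem_normalConeAt hC hint hG₃C hp.2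
  have hpos {u q} {G : Set (Fin 3 → ℝ)} (hu : u ∈ normalConeAt C p)
      (hz : ∀ y ∈ C, y ∈ G ↔ u ⬝ᵥ (y - p) = 0) (hq : q ∈ C) (hqG : q ∉ G) : 0 < u ⬝ᵥ (q - p) :=
    (mem_normalConeAt_iff.1 hu q hq).lt_of_ne' (mt (hz q hq).2 hqG)
  have hli : LinearIndependent ℝ ![u₁, u₂, u₃] :=
    linearIndependent_of_pairing_nonneg (dotProductBilin ℝ ℝ)
      (v₁ := q₁ - p) (v₂ := q₂ - p) (v₃ := q₃ - p)
      ((hz₁ q₁ hC₁).1 hq₁) ((hz₂ q₂ hC₂).1 hq₂) (hz₃ q₃ hq₃)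
      (hpos hu₁ hz₁ hC₂ fun h ↦ hq₂p (h₁₂.subset ⟨h, hq₂⟩))
      (hpos hu₁ hz₁ hC₃ fun h ↦ hq₃p (h₁₃.subset ⟨h, hq₃⟩))
      (hpos hu₂ hz₂ hC₁ fun h ↦ hq₁p (h₁₂.subset ⟨hq₁, h⟩))
      (hpos hu₂ hz₂ hC₃ fun h ↦ hq₃p (h₂₃.subset ⟨h, hq₃⟩))
      (mem_normalConeAt_iff.1 hu₃ q₁ hC₁) (mem_normalConeAt_iff.1 hu₃ q₂ hC₂) hu₃0
  exact isCornerPoint_of_linearIndependent (hG₃.2.subset hp.2) hli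
    (by simp [Fin.forall_fin_succ, hu₁, hu₂, hu₃])

section JointNumericalRange

variable {n : Type*} [Fintype n] {k : ℕ}

theorem convex_setOf_isDensity : Convex ℝ {ρ : Matrix n n ℂ | IsDensity ρ} := by
  intro ρ hρ σ hσ a b ha hb hab
  refine ⟨(hρ.1.smul ha).add (hσ.1.smul hb), ?_⟩
  rw [trace_add, trace_smul, trace_smul, hρ.2, hσ.2, ← add_smul, hab, one_smul]

theorem isLinearMap_wpt (A : Fin k → Matrix n n ℂ) : IsLinearMap ℝ (wpt A) where
  map_add ρ σ := by ext i; simp [wpt, add_mul]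
  map_smul c ρ := by ext i; simp [wpt]

theorem convex_JNR (A : Fin k → Matrix n n ℂ) : Convex ℝ (JNR A) :=
  convex_setOf_isDensity.is_linear_image (isLinearMap_wpt A)

end JointNumericalRange

theorem stmt5_general {C : Set (Fin 3 → ℝ)} (hC : Convex ℝ C) (hdim : convDim C = 3)
    {G₁ G₂ G₃ : Set (Fin 3 → ℝ)}
    (hG₁ : IsFaceOf C G₁) (hd₁ : convDim G₁ = 1)
    (hG₂ : IsFaceOf C G₂) (hd₂ : convDim G₂ = 1)
    (hG₃ : IsFaceOf C G₃) (hd₃ : convDim G₃ = 1)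
    (h12 : G₁ ≠ G₂) (h13 : G₁ ≠ G₃) (h23 : G₂ ≠ G₃)
    (hexp : (IsExposedFace C G₁ ∧ IsExposedFace C G₂) ∨
            (IsExposedFace C G₁ ∧ IsExposedFace C G₃) ∨
            (IsExposedFace C G₂ ∧ IsExposedFace C G₃))
    (hne : (G₁ ∩ G₂ ∩ G₃).Nonempty) :
    ∃ p, G₁ ∩ G₂ ∩ G₃ = {p} ∧ IsCornerPoint C p := by
  obtain ⟨p, ⟨hp₁, hp₂⟩, hp₃⟩ := hne
  have hint : (interior C).Nonempty :=
    interior_nonempty_of_convDim_eq hC ⟨p, hG₁.2.subset hp₁⟩ (by simpa using hdim)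
  have hn₁ : G₁.Nontrivial := convDim_pos_iff.1 (hd₁ ▸ one_pos)
  have hn₂ : G₂.Nontrivial := convDim_pos_iff.1 (hd₂ ▸ one_pos)
  have hn₃ : G₃.Nontrivial := convDim_pos_iff.1 (hd₃ ▸ one_pos)
  have hi₁₂ : G₁ ∩ G₂ = {p} := hG₁.inter_eq_singleton hG₂ hd₁ hd₂ h12 ⟨hp₁, hp₂⟩
  have hi₁₃ : G₁ ∩ G₃ = {p} := hG₁.inter_eq_singleton hG₃ hd₁ hd₃ h13 ⟨hp₁, hp₃⟩
  have hi₂₃ : G₂ ∩ G₃ = {p} := hG₂.inter_eq_singleton hG₃ hd₂ hd₃ h23 ⟨hp₂, hp₃⟩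
  refine ⟨p, by rw [hi₁₂, Set.inter_eq_left, Set.singleton_subset_iff]; exact hp₃, ?_⟩
  rcases hexp with ⟨he₁, he₂⟩ | ⟨he₁, he₃⟩ | ⟨he₂, he₃⟩
  · exact isCornerPoint_of_inter_eq_singleton hC hint he₁ he₂ hG₃ hn₁ hn₂ hn₃ hi₁₂ hi₁₃ hi₂₃
  · exact isCornerPoint_of_inter_eq_singleton hC hint he₁ he₃ hG₂ hn₁ hn₃ hn₂ hi₁₃ hi₁₂
      (Set.inter_comm G₂ G₃ ▸ hi₂₃)
  · exact isCornerPoint_of_inter_eq_singleton hC hint he₂ he₃ hG₁ hn₂ hn₃ hn₁ hi₂₃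
      (Set.inter_comm G₁ G₂ ▸ hi₁₂) (Set.inter_comm G₁ G₃ ▸ hi₁₃)

/-- if three mutually distinct one-dimensional faces of `W`, at
least two of which are exposed, have a point in common, then their intersection
is a corner point of `W`. -/
theorem stmt5 (A : Fin 3 → Matrix (Fin 4) (Fin 4) ℂ)
    (hA : ∀ i, (A i).IsHermitian)
    (hdim : convDim (JNR A) = 3)
    (G₁ G₂ G₃ : Set (Fin 3 → ℝ))
    (hG₁ : IsFaceOf (JNR A) G₁) (hd₁ : convDim G₁ = 1)
    (hG₂ : IsFaceOf (JNR A) G₂) (hd₂ : convDim G₂ = 1)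
    (hG₃ : IsFaceOf (JNR A) G₃) (hd₃ : convDim G₃ = 1)
    (h12 : G₁ ≠ G₂) (h13 : G₁ ≠ G₃) (h23 : G₂ ≠ G₃)
    (hexp : (IsExposedFace (JNR A) G₁ ∧ IsExposedFace (JNR A) G₂) ∨
            (IsExposedFace (JNR A) G₁ ∧ IsExposedFace (JNR A) G₃) ∨
            (IsExposedFace (JNR A) G₂ ∧ IsExposedFace (JNR A) G₃))
    (hne : (G₁ ∩ G₂ ∩ G₃).Nonempty) :
    ∃ p, G₁ ∩ G₂ ∩ G₃ = {p} ∧ IsCornerPoint (JNR A) p :=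
  stmt5_general (convex_JNR A) hdim hG₁ hd₁ hG₂ hd₂ hG₃ hd₃ h12 h13 h23 hexp hne
end
end

section
/- Let A₁, A₂, A₃ be hermitian 4×4 complex matrices whose joint numerical range W = W(A₁,A₂,A₃) has dimension 3. Suppose F₂ is a one-dimensional nonexposed face of W, G is a one-dimensional exposed face of W, and F₂ ∩ G = {p}. Then p is a corner point of W, or there exists a non-elliptic face H of W with F₂ ⊆ H and G ⊆ H. -/
open Matrix ComplexOrder

noncomputable section

/-! Let `u` be a nonzero normal of `W` at `p` whose exposed face `H` contains `F₂`. As `F₂` is not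
exposed, it is a proper segment face of `H`, so `H` is planar but, a disk having no such face, not
an elliptic disk. This settles the case `G ⊆ H`.

Otherwise write `G` as the exposed face with normal `v`, and cut `F₂` out of `H` by some `w` in the
plane of `H`. Let `S a = ∑ i, a i • (A i - p i)`, so that `ker (S u)` and `ker (S v)` are the
eigenspaces of `H` and `G`. As `H ∩ G = {p}`, the operator `S w` maps `ker (S u) ⊓ ker (S v)` into
the orthogonal complement of both kernels. A dimension count in `ℂ⁴` shows that this intersection is
zero or that the two kernels span `ℂ⁴`; either way `S w` vanishes on it. Hence
`S (u + v + ε • w)` is still positive semidefinite for small `ε > 0`, and `u`, `v`, `u + v + ε • w`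
are three linearly independent normals of `W` at `p`. -/

section Faces

variable {E : Type*} [AddCommGroup E] [Module ℝ E] {C F : Set E}

namespace IsFaceOf

theorem mem_of_mem_line (hF : IsFaceOf C F) {x y z : E} (hx : x ∈ F) (hy : y ∈ F) (hxy : x ≠ y)
    (hz : z ∈ C) (hline : z ∈ line[ℝ, x, y]) : z ∈ F := by
  obtain rfl | hzx := eq_or_ne z x
  · exact hx
  obtain rfl | hzy := eq_or_ne z y
  · exact hy
  rcases (collinear_insert_of_mem_affineSpan_pair hline).wbtw_or_wbtw_or_wbtw with h | h | h
  · exact hF.2.left_mem_of_mem_openSegment hz (hF.2.subset hy) hx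
      (mem_openSegment_of_ne_left_right hzx hxy.symm h.mem_segment)
  · exact hF.2.right_mem_of_mem_openSegment (hF.2.subset hx) hz hy
      (mem_openSegment_of_ne_left_right hxy hzy h.mem_segment)
  · exact hF.1.segment_subset hy hx h.mem_segment

theorem eq_of_collinear (hF : IsFaceOf C F) (hC : Collinear ℝ C) (hnt : F.Nontrivial) :
    F = C := by
  obtain ⟨x, hx, y, hy, hxy⟩ := hnt
  exact hF.2.subset.antisymm fun z hz => hF.mem_of_mem_line hx hy hxy hz
    (hC.mem_affineSpan_of_mem_of_ne (hF.2.subset hx) (hF.2.subset hy) hz hxy)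

theorem inter_eq_singleton_of_collinear {G : Set E} {p : E} (hF : IsFaceOf C F) (hGC : G ⊆ C)
    (hG : Collinear ℝ G) (hGF : ¬G ⊆ F) (hpF : p ∈ F) (hpG : p ∈ G) : F ∩ G = {p} := by
  refine Set.Subset.antisymm (fun z hz => ?_) (Set.singleton_subset_iff.2 ⟨hpF, hpG⟩)
  by_contra hzp
  exact hGF fun x hx => hF.mem_of_mem_line hz.1 hpF hzp (hGC hx)
    (hG.mem_affineSpan_of_mem_of_ne hz.2 hpG hx hzp)

theorem mono {H : Set E} (hF : IsFaceOf C F) (hHC : H ⊆ C) (hFH : F ⊆ H) : IsFaceOf H F :=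
  ⟨hF.1, hF.2.mono hHC hFH⟩

theorem inter_preimage {E' : Type*} [AddCommGroup E'] [Module ℝ E'] {D : Set E'} {f : E' →ᵃ[ℝ] E}
    (hD : Convex ℝ D) (hF : IsFaceOf (f '' D) F) : IsFaceOf D (D ∩ f ⁻¹' F) := by
  refine ⟨hD.inter (hF.1.affine_preimage f), Set.inter_subset_left,
    fun x hx y hy z hz hzxy => ⟨hx, ?_⟩⟩
  refine hF.2.left_mem_of_mem_openSegment (Set.mem_image_of_mem f hx) (Set.mem_image_of_mem f hy)
    hz.2 ?_
  rw [← image_openSegment]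
  exact Set.mem_image_of_mem f hzxy

theorem eq_convexHull_inter {S : Set E} (hF : IsFaceOf (convexHull ℝ S) F) :
    F = convexHull ℝ (S ∩ F) := by
  refine Set.Subset.antisymm (fun z hz => ?_) (convexHull_min Set.inter_subset_right hF.1)
  suffices h : convexHull ℝ S ⊆ {x ∈ convexHull ℝ S | x ∈ F → x ∈ convexHull ℝ (S ∩ F)} from
    (h (hF.2.subset hz)).2 hz
  refine convexHull_min
    (fun x hx => ⟨subset_convexHull ℝ S hx, fun hxF => subset_convexHull ℝ _ ⟨hx, hxF⟩⟩)
    (convex_iff_openSegment_subset.2 fun x hx y hy m hm =>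
      ⟨(convex_convexHull ℝ S).openSegment_subset hx.1 hy.1 hm, fun hmF => ?_⟩)
  exact (convex_convexHull ℝ _).openSegment_subset
    (hx.2 (hF.2.left_mem_of_mem_openSegment hx.1 hy.1 hmF hm))
    (hy.2 (hF.2.right_mem_of_mem_openSegment hx.1 hy.1 hmF hm)) hm

variable [TopologicalSpace E] [IsTopologicalAddGroup E] [ContinuousSMul ℝ E]

theorem eq_of_mem_interior (hF : IsFaceOf C F) {x : E} (hxF : x ∈ F) (hx : x ∈ interior C) :
    F = C := by
  refine hF.2.subset.antisymm fun z hz => ?_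
  have hcont : Filter.Tendsto (fun t : ℝ => AffineMap.lineMap z x t) (nhds 1) (nhds x) := by
    simpa using (AffineMap.lineMap_continuous (R := ℝ) (p := z) (q := x)).tendsto 1
  obtain ⟨t, htC, ht⟩ := (((hcont.eventually (mem_interior_iff_mem_nhds.1 hx)).filter_mono
    nhdsWithin_le_nhds).and (self_mem_nhdsWithin (s := Set.Ioi 1))).exists
  have ht0 : (0 : ℝ) < t := one_pos.trans ht
  refine hF.2.left_mem_of_mem_openSegment hz htC hxF ?_
  rw [openSegment_eq_image_lineMap]
  exact ⟨t⁻¹, ⟨inv_pos.2 ht0, inv_lt_one_of_one_lt₀ ht⟩, by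
    rw [AffineMap.lineMap_lineMap_right, inv_mul_cancel₀ ht0.ne', AffineMap.lineMap_apply_one]⟩

theorem eq_of_strictConvex (hF : IsFaceOf C F) (hC : StrictConvex ℝ C) (hnt : F.Nontrivial) :
    F = C := by
  obtain ⟨x, hx, y, hy, hxy⟩ := hnt
  have hm := midpoint_mem_openSegment (𝕜 := ℝ) x y
  exact hF.eq_of_mem_interior (hF.1.openSegment_subset hx hy hm)
    (hC.openSegment_subset (hF.2.subset hx) (hF.2.subset hy) hxy hm)

end IsFaceOf

theorem convDim_eq_finrank_vectorSpan (F : Set E) :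
    convDim F = Module.finrank ℝ (vectorSpan ℝ F) := by
  rw [convDim, direction_affineSpan]

theorem nontrivial_of_convDim_ne_zero (h : convDim F ≠ 0) : F.Nontrivial := by
  rw [← Set.not_subsingleton_iff]
  intro hsub
  exact h (by rw [convDim_eq_finrank_vectorSpan, vectorSpan_of_subsingleton ℝ hsub, finrank_bot])

theorem collinear_of_convDim_eq_one (h : convDim F = 1) : Collinear ℝ F := by
  rw [convDim_eq_finrank_vectorSpan] at h
  have : FiniteDimensional ℝ (vectorSpan ℝ F) := Module.finite_of_finrank_eq_succ h
  exact collinear_iff_finrank_le_one.2 h.le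

end Faces

theorem interior_nonempty_of_convDim_eq_finrank {E : Type*} [NormedAddCommGroup E]
    [NormedSpace ℝ E] [FiniteDimensional ℝ E] {C : Set E} (hC : Convex ℝ C) (hne : C.Nonempty)
    (hdim : convDim C = Module.finrank ℝ E) : (interior C).Nonempty := by
  rw [hC.interior_nonempty_iff_affineSpan_eq_top,
    ← AffineSubspace.direction_eq_top_iff_of_nonempty (hne.mono (subset_affineSpan ℝ C))]
  exact Submodule.eq_top_of_finrank_eq hdim

section SupportingHyperplanes

variable {d : ℕ} {C F : Set (Fin d → ℝ)} {p u : Fin d → ℝ}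

/-- The section of `C` by the hyperplane through `p` with normal vector `u`. If `u` is a normal
vector of `C` at `p ∈ C`, this is the exposed face of `C` with inner normal vector `u`. -/
def supportFace (C : Set (Fin d → ℝ)) (p u : Fin d → ℝ) : Set (Fin d → ℝ) :=
  {x ∈ C | (x - p) ⬝ᵥ u = 0}

theorem mem_supportFace_self (hp : p ∈ C) : p ∈ supportFace C p u :=
  ⟨hp, by rw [sub_self, zero_dotProduct]⟩

theorem mem_normalConeAt : u ∈ normalConeAt C p ↔ ∀ y ∈ C, 0 ≤ (y - p) ⬝ᵥ u :=
  Iff.rfl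

theorem mem_normalConeAt_convexHull {S : Set (Fin d → ℝ)} :
    u ∈ normalConeAt (convexHull ℝ S) p ↔ u ∈ normalConeAt S p := by
  simp only [mem_normalConeAt, sub_dotProduct, sub_nonneg]
  exact (convex_halfSpace_ge ((dotProductBilin ℝ ℝ).flip u).isLinear (p ⬝ᵥ u)).convexHull_subset_iff

theorem dotR_le_dotR_iff {x y : Fin d → ℝ} : dotR u x ≤ dotR u y ↔ 0 ≤ (y - x) ⬝ᵥ u := by
  rw [sub_dotProduct, sub_nonneg, dotProduct_comm x, dotProduct_comm y]
  rfl

theorem isFaceOf_supportFace (hC : Convex ℝ C) (hu : u ∈ normalConeAt C p) :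
    IsFaceOf C (supportFace C p u) := by
  have hcombo : ∀ {x y z : Fin d → ℝ} {a b : ℝ}, a + b = 1 → a • x + b • y = z →
      (z - p) ⬝ᵥ u = a * ((x - p) ⬝ᵥ u) + b * ((y - p) ⬝ᵥ u) := by
    rintro x y _ a b hab rfl
    have : a • x + b • y - p = a • (x - p) + b • (y - p) := by
      rw [smul_sub, smul_sub, sub_add_sub_comm, ← add_smul, hab, one_smul]
    rw [this, add_dotProduct, smul_dotProduct, smul_dotProduct, smul_eq_mul, smul_eq_mul]
  refine ⟨fun x hx y hy a b ha hb hab => ⟨hC hx.1 hy.1 ha hb hab, ?_⟩, fun x hx => hx.1,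
    fun x hx y hy z hz ⟨a, b, ha, hb, hab, hxyz⟩ => ⟨hx, ?_⟩⟩
  · rw [hcombo hab rfl, hx.2, hy.2, mul_zero, mul_zero, add_zero]
  · have hsum := hcombo hab hxyz
    have hx0 := mul_nonneg ha.le (mem_normalConeAt.1 hu x hx)
    have hy0 := mul_nonneg hb.le (mem_normalConeAt.1 hu y hy)
    rw [hz.2] at hsum
    exact (mul_eq_zero.1 ((add_eq_zero_iff_of_nonneg hx0 hy0).1 hsum.symm).1).resolve_left ha.ne'

theorem isExposedFace_iff_of_mem (hp : p ∈ F) :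
    IsExposedFace C F ↔ ∃ u ∈ normalConeAt C p, F = supportFace C p u := by
  simp only [IsExposedFace, dotR_le_dotR_iff]
  refine exists_congr fun u => ⟨?_, ?_⟩
  · rintro rfl
    refine ⟨hp.2, Set.ext fun x => and_congr_right fun hx => ⟨fun h => ?_, fun h y hy => ?_⟩⟩
    · refine (hp.2 x hx).antisymm' ?_
      rw [← neg_sub p x, neg_dotProduct]
      exact neg_nonpos.2 (h p hp.1)
    · rw [← sub_sub_sub_cancel_right y x p, sub_dotProduct, h, sub_zero]
      exact hp.2 y hy
  · rintro ⟨hu, rfl⟩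
    refine Set.ext fun x => and_congr_right fun hx => ⟨fun h y hy => ?_, fun h => ?_⟩
    · rw [← sub_sub_sub_cancel_right y x p, sub_dotProduct, h, sub_zero]
      exact hu y hy
    · refine (mem_normalConeAt.1 hu x hx).antisymm' ?_
      rw [← neg_sub p x, neg_dotProduct]
      exact neg_nonpos.2 (h p hp.1)

theorem IsFaceOf.exists_mem_normalConeAt (hC : Convex ℝ C) (hF : IsFaceOf C F) (hne : F ≠ C)
    (hint : (interior C).Nonempty) (hp : p ∈ F) :
    ∃ u ∈ normalConeAt C p, u ≠ 0 ∧ F ⊆ supportFace C p u := by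
  have hdisj : Disjoint (interior C) F :=
    Set.disjoint_left.2 fun x hx hxF => hne (hF.eq_of_mem_interior hxF hx)
  obtain ⟨f, c, hf0, hfC, hfF⟩ := geometric_hahn_banach_of_nonempty_interior hC hF.1 hdisj hint
    ⟨p, hp⟩
  obtain ⟨u, hu⟩ := (dotProductEquiv ℝ (Fin d)).surjective (-f : StrongDual ℝ (Fin d → ℝ))
  have hfu : ∀ x, x ⬝ᵥ u = -f x := fun x => by
    rw [dotProduct_comm]; exact LinearMap.congr_fun hu x
  refine ⟨u, fun y hy => ?_, ?_, fun z hz => ⟨hF.2.subset hz, ?_⟩⟩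
  · change 0 ≤ (y - p) ⬝ᵥ u
    rw [hfu, map_sub]
    linarith [hfC y hy, hfF p hp]
  · rintro rfl
    exact hf0 (ContinuousLinearMap.ext fun x => neg_eq_zero.1 ((hfu x).symm.trans (by simp)))
  · rw [hfu, map_sub]
    linarith [hfC z (hF.2.subset hz), hfF z hz, hfC p (hF.2.subset hp), hfF p hp]

theorem IsFaceOf.exists_ne_supportFace_of_not_isExposedFace (hC : Convex ℝ C)
    (hint : (interior C).Nonempty) (hF : IsFaceOf C F) (hexp : ¬IsExposedFace C F) (hp : p ∈ F) :
    ∃ u ∈ normalConeAt C p, u ≠ 0 ∧ IsFaceOf (supportFace C p u) F ∧ F ≠ supportFace C p u := by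
  have hne_supportFace : ∀ u ∈ normalConeAt C p, F ≠ supportFace C p u := fun u hu h =>
    hexp ((isExposedFace_iff_of_mem hp).2 ⟨u, hu, h⟩)
  have hne : F ≠ C := by
    simpa [supportFace] using hne_supportFace 0 (mem_normalConeAt.2 (by simp))
  obtain ⟨u, hu, hu0, hFu⟩ := hF.exists_mem_normalConeAt hC hne hint hp
  exact ⟨u, hu, hu0, hF.mono (isFaceOf_supportFace hC hu).2.subset hFu, hne_supportFace u hu⟩

/-- A supporting hyperplane is recognised by one point on its positive side: a segment from there
to a point on the negative side would cross the face. -/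
theorem mem_normalConeAt_of_isFaceOf_supportFace (hC : Convex ℝ C)
    (hF : IsFaceOf C (supportFace C p u)) {h : Fin d → ℝ} (hh : h ∈ C)
    (hpos : 0 < (h - p) ⬝ᵥ u) : u ∈ normalConeAt C p := by
  refine mem_normalConeAt.2 fun x hx => not_lt.1 fun hneg => hpos.ne' ?_
  set a := (x - p) ⬝ᵥ u with ha
  set b := (h - p) ⬝ᵥ u with hb
  have hab : 0 < b - a := by linarith
  set m := (b / (b - a)) • x + (-a / (b - a)) • h
  have hsum : b / (b - a) + -a / (b - a) = 1 := by field_simp; ring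
  have hmem : m ∈ openSegment ℝ x h :=
    ⟨_, _, div_pos hpos hab, div_pos (neg_pos.2 hneg) hab, hsum, rfl⟩
  have hmp : m - p = (b / (b - a)) • (x - p) + (-a / (b - a)) • (h - p) := by
    rw [smul_sub, smul_sub, sub_add_sub_comm, ← add_smul, hsum, one_smul]
  have hmF : m ∈ supportFace C p u := by
    refine ⟨hC.openSegment_subset hx hh hmem, ?_⟩
    rw [hmp, add_dotProduct, smul_dotProduct, smul_dotProduct, ← ha, ← hb, smul_eq_mul,
      smul_eq_mul]
    ring
  exact (hF.2.right_mem_of_mem_openSegment hx hh hmF hmem).2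

theorem exists_smul_sub_smul_orthogonal {G : Set (Fin d → ℝ)}
    (hG : Collinear ℝ G) (hp : p ∈ G) (hGu : ¬∀ x ∈ G, (x - p) ⬝ᵥ u = 0) (w : Fin d → ℝ) :
    ∃ b c : ℝ, b ≠ 0 ∧ ∀ x ∈ G, (x - p) ⬝ᵥ (b • w - c • u) = 0 := by
  obtain ⟨e, he⟩ := (collinear_iff_of_mem hp).1 hG
  have hsub : ∀ x ∈ G, ∃ r : ℝ, x - p = r • e := fun x hx => by
    obtain ⟨r, rfl⟩ := he x hx
    exact ⟨r, by rw [vadd_eq_add, add_sub_cancel_right]⟩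
  refine ⟨e ⬝ᵥ u, e ⬝ᵥ w, fun heu => hGu fun x hx => ?_, fun x hx => ?_⟩
  · obtain ⟨r, hr⟩ := hsub x hx
    rw [hr, smul_dotProduct, heu, smul_zero]
  · obtain ⟨r, hr⟩ := hsub x hx
    rw [hr, smul_dotProduct, dotProduct_sub, dotProduct_smul, dotProduct_smul,
      smul_eq_mul (e ⬝ᵥ u), smul_eq_mul (e ⬝ᵥ w), mul_comm, sub_self, smul_zero]

theorem span_eq_top_of_dotProduct_eq_zero {S : Set (Fin d → ℝ)}
    (h : ∀ x, (∀ s ∈ S, x ⬝ᵥ s = 0) → x = 0) : Submodule.span ℝ S = ⊤ := by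
  by_contra hS
  obtain ⟨f, hf0, hf⟩ := Submodule.exists_le_ker_of_lt_top _ (lt_top_iff_ne_top.2 hS)
  obtain ⟨x, rfl⟩ := (dotProductEquiv ℝ (Fin d)).surjective f
  have hx : x = 0 := h x fun s hs => hf (Submodule.subset_span hs)
  exact hf0 (by rw [hx, map_zero])

theorem convDim_eq_two_of_not_collinear {H : Set (Fin 3 → ℝ)} {p u : Fin 3 → ℝ} (hu : u ≠ 0)
    (hH : ∀ x ∈ H, (x - p) ⬝ᵥ u = 0) (hcol : ¬Collinear ℝ H) : convDim H = 2 := by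
  have hlt : vectorSpan ℝ H < ⊤ := by
    refine lt_top_iff_ne_top.2 fun htop => hu (dotProduct_self_eq_zero.1 ?_)
    have hle : vectorSpan ℝ H ≤ LinearMap.ker (dotProductEquiv ℝ (Fin 3) u) := by
      refine Submodule.span_le.2 ?_
      rintro _ ⟨x, hx, y, hy, rfl⟩
      change u ⬝ᵥ (x - y) = 0
      rw [dotProduct_comm, ← sub_sub_sub_cancel_right x y p, sub_dotProduct, hH x hx, hH y hy,
        sub_zero]
    exact hle (htop ▸ Submodule.mem_top : u ∈ vectorSpan ℝ H)
  have hlt3 := Submodule.finrank_lt hlt.ne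
  rw [Module.finrank_fin_fun] at hlt3
  rw [collinear_iff_finrank_le_one] at hcol
  rw [convDim_eq_finrank_vectorSpan]
  omega

end SupportingHyperplanes

section EllipticDisks

theorem strictConvex_unitDisk2 : StrictConvex ℝ unitDisk2 := by
  have h : unitDisk2 = (EuclideanSpace.equiv (Fin 2) ℝ).symm ⁻¹' Metric.closedBall 0 1 := by
    ext v
    simp [unitDisk2, EuclideanSpace.norm_eq, Fin.sum_univ_two]
  rw [h]
  exact (strictConvex_closedBall ℝ _ 1).linear_preimage
    (EuclideanSpace.equiv (Fin 2) ℝ).symm.toLinearEquiv.toLinearMap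
    (EuclideanSpace.equiv (Fin 2) ℝ).symm.continuous
    (EuclideanSpace.equiv (Fin 2) ℝ).symm.injective

theorem IsFaceOf.not_isEllipticDisk {H F : Set (Fin 3 → ℝ)} (hF : IsFaceOf H F)
    (hnt : F.Nontrivial) (hne : F ≠ H) : ¬IsEllipticDisk H := by
  rintro ⟨f, -, rfl⟩
  have himage : f '' (unitDisk2 ∩ f ⁻¹' F) = F := by
    rw [Set.image_inter_preimage, Set.inter_eq_right.2 hF.2.subset]
  have hdisk := (hF.inter_preimage strictConvex_unitDisk2.convex).eq_of_strictConvex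
    strictConvex_unitDisk2 (Set.nontrivial_of_image f _ (himage.symm ▸ hnt))
  exact hne (himage.symm.trans (congrArg (f '' ·) hdisk))

theorem isNonEllipticFace_supportFace {C F : Set (Fin 3 → ℝ)} {p u : Fin 3 → ℝ}
    (hC : Convex ℝ C) (hu : u ∈ normalConeAt C p) (hu0 : u ≠ 0)
    (hF : IsFaceOf (supportFace C p u) F) (hnt : F.Nontrivial) (hne : F ≠ supportFace C p u) :
    IsNonEllipticFace C (supportFace C p u) :=
  ⟨isFaceOf_supportFace hC hu,
    convDim_eq_two_of_not_collinear hu0 (fun _ hx => hx.2) fun hcol =>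
      hne (hF.eq_of_collinear hcol hnt),
    hF.not_isEllipticDisk hnt hne⟩

end EllipticDisks

section PlanarFaces

theorem exists_eq_smul_of_dotProduct_cross_eq_zero {u e x : Fin 3 → ℝ} (hu : u ≠ 0) (he : e ≠ 0)
    (hue : u ⬝ᵥ e = 0) (hxu : x ⬝ᵥ u = 0) (hxw : x ⬝ᵥ (u ⨯₃ e) = 0) : ∃ t : ℝ, x = t • e := by
  set v := x ⨯₃ e with hv
  have huv : u ⬝ᵥ v = 0 := by
    rw [hv, triple_product_permutation, ← cross_anticomm, dotProduct_neg, hxw, neg_zero]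
  have huv' : u ⨯₃ v = 0 := by
    rw [hv, cross_cross_eq_smul_sub_smul', hue, hxu, zero_smul, zero_smul,
      sub_zero]
  have hv0 : v = 0 := by
    have h := cross_dot_cross u v u v
    rw [huv', zero_dotProduct, huv, zero_mul, sub_zero, eq_comm, mul_eq_zero] at h
    exact dotProduct_self_eq_zero.1 (h.resolve_left (mt dotProduct_self_eq_zero.1 hu))
  have hdep : ¬LinearIndependent ℝ ![e, x] := by
    rw [← crossProduct_ne_zero_iff_linearIndependent, ← cross_anticomm, ← hv, hv0, neg_zero]
    exact not_not.2 rfl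
  by_contra! h
  exact hdep ((LinearIndependent.pair_iff' he).2 fun t ht => h t ht.symm)

theorem IsFaceOf.exists_eq_supportFace_of_planar {H F : Set (Fin 3 → ℝ)} {p q u : Fin 3 → ℝ}
    (hF : IsFaceOf H F) (hH : Convex ℝ H) (hu : u ≠ 0) (hHu : ∀ x ∈ H, (x - p) ⬝ᵥ u = 0)
    (hcol : Collinear ℝ F) (hp : p ∈ F) (hq : q ∈ F) (hpq : p ≠ q) (hne : F ≠ H) :
    ∃ w ∈ normalConeAt H p, F = supportFace H p w ∧
      ∀ x, x ⬝ᵥ u = 0 → x ⬝ᵥ w = 0 → ∃ t : ℝ, x = t • (q - p) := by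
  obtain ⟨h, hhH, hhF⟩ := Set.exists_of_ssubset (hF.2.subset.ssubset_of_ne hne)
  have hqp : q - p ≠ 0 := sub_ne_zero.2 hpq.symm
  have hmem_of_smul : ∀ x ∈ H, (∃ t : ℝ, x - p = t • (q - p)) → x ∈ F := by
    rintro x hx ⟨t, ht⟩
    refine hF.mem_of_mem_line hp hq hpq hx ?_
    rw [← sub_add_cancel x p, ht]
    exact AffineMap.lineMap_mem_affineSpan_pair t p q
  have hline : ∀ x, x ⬝ᵥ u = 0 → x ⬝ᵥ (u ⨯₃ (q - p)) = 0 → ∃ t : ℝ, x = t • (q - p) :=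
    fun x => exists_eq_smul_of_dotProduct_cross_eq_zero hu hqp
      (by rw [dotProduct_comm, hHu q (hF.2.subset hq)])
  set s := (h - p) ⬝ᵥ (u ⨯₃ (q - p)) with hs
  have hs0 : s ≠ 0 := fun hs0 => hhF (hmem_of_smul h hhH (hline _ (hHu h hhH) hs0))
  have hsmul : ∀ x, x ⬝ᵥ (s • (u ⨯₃ (q - p))) = 0 ↔ x ⬝ᵥ (u ⨯₃ (q - p)) = 0 := fun x => by
    rw [dotProduct_smul, smul_eq_mul, mul_eq_zero, or_iff_right hs0]
  have hFw : F = supportFace H p (s • (u ⨯₃ (q - p))) := by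
    refine Set.Subset.antisymm (fun x hx => ⟨hF.2.subset hx, (hsmul _).2 ?_⟩) fun x hx =>
      hmem_of_smul x hx.1 (hline _ (hHu x hx.1) ((hsmul _).1 hx.2))
    obtain ⟨t, rfl⟩ := mem_affineSpan_pair_iff_exists_lineMap_eq.1
      (hcol.mem_affineSpan_of_mem_of_ne hp hq hx hpq)
    rw [AffineMap.lineMap_apply, vadd_eq_add, add_sub_cancel_right, vsub_eq_sub,
      smul_dotProduct, dot_cross_self, smul_zero]
  refine ⟨_, mem_normalConeAt_of_isFaceOf_supportFace hH (hFw ▸ hF) hhH ?_, hFw,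
    fun x hxu hxw => hline x hxu ((hsmul x).1 hxw)⟩
  rw [dotProduct_smul, ← hs, smul_eq_mul]
  exact mul_self_pos.2 hs0

end PlanarFaces

section PositiveOperators

variable {𝕜 E : Type*} [RCLike 𝕜] [NormedAddCommGroup E] [InnerProductSpace 𝕜 E]
  {T M K : E →ₗ[𝕜] E}

theorem mem_orthogonal_of_re_inner_eq_zero {N : Submodule 𝕜 E} (hT : T.IsSymmetric)
    (hN : ∀ y ∈ N, 0 ≤ RCLike.re (inner 𝕜 (T y) y)) {x : E} (hx : x ∈ N)
    (hx0 : RCLike.re (inner 𝕜 (T x) x) = 0) : T x ∈ Nᗮ := by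
  let form : PreInnerProductSpace.Core 𝕜 N :=
    { inner := fun y z => inner 𝕜 (T y) z
      conj_inner_symm := fun y z => by rw [inner_conj_symm, hT]
      re_inner_nonneg := fun y => hN y y.2
      add_left := fun y z w => by
        rw [Submodule.coe_add, map_add, inner_add_left]
      smul_left := fun y z r => by
        rw [Submodule.coe_smul, map_smul, inner_smul_left] }
  refine (Submodule.mem_orthogonal' N _).2 fun y hy => norm_eq_zero.1 ?_
  have hcauchy : ‖inner 𝕜 (T x) y‖ * ‖inner 𝕜 (T y) x‖ ≤
      RCLike.re (inner 𝕜 (T x) x) * RCLike.re (inner 𝕜 (T y) y) :=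
    InnerProductSpace.Core.inner_mul_inner_self_le (c := form) (⟨x, hx⟩ : N) ⟨y, hy⟩
  rw [hx0, zero_mul, hT y x, norm_inner_symm y] at hcauchy
  exact mul_self_eq_zero.1 (hcauchy.antisymm (mul_self_nonneg _))

theorem mem_ker_of_isPositive_of_re_inner_eq_zero (hT : T.IsPositive) {x : E}
    (hx : RCLike.re (inner 𝕜 (T x) x) = 0) : x ∈ LinearMap.ker T := by
  have h := mem_orthogonal_of_re_inner_eq_zero hT.isSymmetric
    (fun y _ => hT.re_inner_nonneg_left y) (Submodule.mem_top (x := x)) hx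
  rwa [Submodule.top_orthogonal_eq_bot, Submodule.mem_bot] at h

theorem ker_add_of_isPositive (hT : T.IsPositive) (hM : M.IsPositive) :
    LinearMap.ker (T + M) = LinearMap.ker T ⊓ LinearMap.ker M := by
  refine le_antisymm (fun x hx => ?_) fun x hx => ?_
  · have hsum : RCLike.re (inner 𝕜 (T x) x) + RCLike.re (inner 𝕜 (M x) x) = 0 := by
      rw [← map_add, ← inner_add_left, ← LinearMap.add_apply, LinearMap.mem_ker.1 hx,
        inner_zero_left, map_zero]
    obtain ⟨hTx, hMx⟩ := (add_eq_zero_iff_of_nonneg (hT.re_inner_nonneg_left x)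
      (hM.re_inner_nonneg_left x)).1 hsum
    exact ⟨mem_ker_of_isPositive_of_re_inner_eq_zero hT hTx,
      mem_ker_of_isPositive_of_re_inner_eq_zero hM hMx⟩
  · rw [LinearMap.mem_ker, LinearMap.add_apply, LinearMap.mem_ker.1 hx.1,
      LinearMap.mem_ker.1 hx.2, add_zero]

theorem re_inner_nonneg_of_forall_norm_eq_one {N : Submodule 𝕜 E}
    (hN : ∀ y ∈ N, ‖y‖ = 1 → 0 ≤ RCLike.re (inner 𝕜 (T y) y)) {x : E} (hx : x ∈ N) :
    0 ≤ RCLike.re (inner 𝕜 (T x) x) := by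
  obtain rfl | hx0 := eq_or_ne x 0
  · rw [map_zero, inner_zero_left, map_zero]
  have hunit := hN _ (N.smul_mem ((‖x‖⁻¹ : ℝ) : 𝕜) hx) (by
    rw [norm_smul, RCLike.norm_ofReal, abs_inv, abs_norm, inv_mul_cancel₀ (norm_ne_zero_iff.2 hx0)])
  rw [map_smul, inner_smul_left, inner_smul_right, RCLike.conj_ofReal, ← mul_assoc,
    ← RCLike.ofReal_mul, RCLike.re_ofReal_mul] at hunit
  exact nonneg_of_mul_nonneg_right hunit
    (mul_self_pos.2 (inv_ne_zero (norm_ne_zero_iff.2 hx0)))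

theorem isPositive_of_le_ker {N : Submodule 𝕜 E} [N.HasOrthogonalProjection]
    (hT : T.IsSymmetric) (hN : N ≤ LinearMap.ker T)
    (hpos : ∀ y ∈ Nᗮ, 0 ≤ RCLike.re (inner 𝕜 (T y) y)) : T.IsPositive := by
  refine ⟨hT, fun x => ?_⟩
  obtain ⟨s, hs, y, hy, rfl⟩ := N.exists_add_mem_mem_orthogonal x
  have hTs : T s = 0 := hN hs
  rw [map_add, hTs, zero_add, inner_add_right, hT y s, hTs, inner_zero_right, zero_add]
  exact hpos y hy

theorem exists_pos_isPositive_add_smul [FiniteDimensional 𝕜 E] (hM : M.IsPositive)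
    (hK : K.IsSymmetric) (hker : LinearMap.ker M ≤ LinearMap.ker K) :
    ∃ ε : ℝ, 0 < ε ∧ (M + (ε : 𝕜) • K).IsPositive := by
  let S : Set E := {y | y ∈ (LinearMap.ker M)ᗮ ∧ ‖y‖ = 1}
  have hS : IsCompact S := by
    have := FiniteDimensional.proper 𝕜 E
    have hsphere : S = Metric.sphere 0 1 ∩ ((LinearMap.ker M)ᗮ : Submodule 𝕜 E) := by
      ext y
      simp [S, and_comm]
    exact hsphere ▸ (isCompact_sphere 0 1).inter_right (Submodule.closed_of_finiteDimensional _)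
  let f : ℝ → E → ℝ := fun ε y => RCLike.re (inner 𝕜 ((M + (ε : 𝕜) • K) y) y)
  have hf : Continuous (Function.uncurry f) := by
    have hMc := M.continuous_of_finiteDimensional
    have hKc := K.continuous_of_finiteDimensional
    simp only [f, Function.uncurry_def, LinearMap.add_apply, LinearMap.smul_apply]
    fun_prop
  have hf0 : ∀ y ∈ S, 0 < f 0 y := fun y hy => by
    have hfM : f 0 y = RCLike.re (inner 𝕜 (M y) y) := by simp [f]
    rw [hfM]
    refine (hM.re_inner_nonneg_left y).lt_of_ne' fun h0 => ?_
    have hy0 : y = 0 := (Submodule.orthogonal_disjoint (LinearMap.ker M)).le_bot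
      ⟨mem_ker_of_isPositive_of_re_inner_eq_zero hM h0, hy.1⟩
    exact one_ne_zero (hy.2.symm.trans (by rw [hy0, norm_zero]))
  have hnear : ∀ᶠ ε in nhds (0 : ℝ), ∀ y ∈ S, 0 < f ε y :=
    hS.eventually_forall_of_forall_eventually fun y hy =>
      hf.continuousAt.eventually (lt_mem_nhds (hf0 y hy))
  obtain ⟨ε, hεS, hε⟩ := ((hnear.filter_mono nhdsWithin_le_nhds).and
    (self_mem_nhdsWithin (s := Set.Ioi 0))).exists
  refine ⟨ε, hε, isPositive_of_le_ker (N := LinearMap.ker M)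
    (hM.isSymmetric.add (hK.smul (RCLike.conj_ofReal ε))) (fun x hx => ?_) fun y hy =>
    re_inner_nonneg_of_forall_norm_eq_one (fun z hz hz1 => (hεS z ⟨hz, hz1⟩).le) hy⟩
  rw [LinearMap.mem_ker, LinearMap.add_apply, LinearMap.smul_apply, LinearMap.mem_ker.1 hx,
    LinearMap.mem_ker.1 (hker hx), smul_zero, add_zero]

end PositiveOperators

section DensityMatrices

variable {n : Type*} [Fintype n] {k : ℕ}

theorem isDensity_vecMulVec_star {x : EuclideanSpace ℂ n} (hx : ‖x‖ = 1) :
    IsDensity (vecMulVec x (star x.ofLp)) := by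
  refine ⟨posSemidef_vecMulVec_self_star x.ofLp, ?_⟩
  rw [trace_vecMulVec, ← EuclideanSpace.inner_eq_star_dotProduct, inner_self_eq_norm_sq_to_K, hx]
  norm_num

end DensityMatrices

section JointRange

variable {E : Type*} [NormedAddCommGroup E] [InnerProductSpace ℂ E] {k : ℕ}

/-- The expectation values of the operators `T i` in the state `x`. -/
def expectation (T : Fin k → E →ₗ[ℂ] E) (x : E) : Fin k → ℝ :=
  fun i => RCLike.re (inner ℂ (T i x) x)

/-- The joint numerical range of the compressions of the operators `T i` to the subspace `N`,
encoded as the convex hull of the expectation values in the unit vectors of `N`. -/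
def compressedJNR (T : Fin k → E →ₗ[ℂ] E) (N : Submodule ℂ E) : Set (Fin k → ℝ) :=
  convexHull ℝ (expectation T '' {x ∈ (N : Set E) | ‖x‖ = 1})

/-- The linear pencil `a ↦ ∑ i, a i • (T i - p i)`, whose expectation value in a unit vector `x` is
`⟨expectation T x - p, a⟩`. -/
def shiftedPencil (T : Fin k → E →ₗ[ℂ] E) (p : Fin k → ℝ) : (Fin k → ℝ) →ₗ[ℝ] E →ₗ[ℂ] E :=
  Fintype.linearCombination ℝ fun i => T i - (p i : ℂ) • 1

variable {T : Fin k → E →ₗ[ℂ] E} {p a : Fin k → ℝ} {M N : Submodule ℂ E}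

theorem convex_compressedJNR : Convex ℝ (compressedJNR T N) :=
  convex_convexHull ℝ _

theorem compressedJNR_mono (hMN : M ≤ N) : compressedJNR T M ⊆ compressedJNR T N :=
  convexHull_mono (Set.image_mono fun _ hx => ⟨hMN hx.1, hx.2⟩)

theorem isSymmetric_shiftedPencil (hT : ∀ i, (T i).IsSymmetric) :
    (shiftedPencil T p a).IsSymmetric := by
  rw [shiftedPencil, Fintype.linearCombination_apply]
  refine LinearMap.isSymmetric_sum _ fun i _ => ?_
  rw [← Complex.coe_smul]
  exact ((hT i).sub (LinearMap.IsSymmetric.one.smul (Complex.conj_ofReal _))).smul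
    (Complex.conj_ofReal _)

theorem re_inner_shiftedPencil {x : E} (hx : ‖x‖ = 1) :
    RCLike.re (inner ℂ (shiftedPencil T p a x) x) = (expectation T x - p) ⬝ᵥ a := by
  simp only [shiftedPencil, Fintype.linearCombination_apply, LinearMap.sum_apply, sum_inner,
    map_sum, dotProduct, LinearMap.smul_apply, LinearMap.sub_apply, Module.End.one_apply]
  refine Finset.sum_congr rfl fun i _ => ?_
  rw [← Complex.coe_smul, inner_smul_left, inner_sub_left, inner_smul_left,
    inner_self_eq_norm_sq_to_K, hx]
  simp [expectation, mul_comm]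

theorem mem_normalConeAt_compressedJNR : a ∈ normalConeAt (compressedJNR T N) p ↔
    ∀ x ∈ N, 0 ≤ RCLike.re (inner ℂ (shiftedPencil T p a x) x) := by
  rw [compressedJNR, mem_normalConeAt_convexHull, mem_normalConeAt, Set.forall_mem_image]
  refine ⟨fun h x hx => re_inner_nonneg_of_forall_norm_eq_one (fun y hy hy1 => ?_) hx,
    fun h x hx => ?_⟩
  · rw [re_inner_shiftedPencil hy1]
    exact h ⟨hy, hy1⟩
  · rw [← re_inner_shiftedPencil hx.2]
    exact h x hx.1

theorem isPositive_shiftedPencil_iff (hT : ∀ i, (T i).IsSymmetric) :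
    (shiftedPencil T p a).IsPositive ↔ a ∈ normalConeAt (compressedJNR T ⊤) p := by
  rw [mem_normalConeAt_compressedJNR]
  exact ⟨fun h x _ => h.re_inner_nonneg_left x,
    fun h => ⟨isSymmetric_shiftedPencil hT, fun x => h x Submodule.mem_top⟩⟩

theorem supportFace_compressedJNR (hT : ∀ i, (T i).IsSymmetric)
    (ha : a ∈ normalConeAt (compressedJNR T N) p) : supportFace (compressedJNR T N) p a =
      compressedJNR T (N ⊓ Nᗮ.comap (shiftedPencil T p a)) := by
  rw [(isFaceOf_supportFace convex_compressedJNR ha).eq_convexHull_inter,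
    ← Set.image_inter_preimage, compressedJNR]
  congr 2
  ext x
  refine ⟨fun hx => ⟨⟨hx.1.1, ?_⟩, hx.1.2⟩, fun hx => ⟨⟨hx.1.1, hx.2⟩, ?_, ?_⟩⟩
  · exact mem_orthogonal_of_re_inner_eq_zero (isSymmetric_shiftedPencil hT)
      (mem_normalConeAt_compressedJNR.1 ha) hx.1.1 ((re_inner_shiftedPencil hx.1.2).trans hx.2.2)
  · exact subset_convexHull ℝ _ (Set.mem_image_of_mem _ ⟨hx.1.1, hx.2⟩)
  · rw [← re_inner_shiftedPencil hx.2, Submodule.inner_left_of_mem_orthogonal hx.1.1 hx.1.2,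
      map_zero]

theorem supportFace_compressedJNR_top (hT : ∀ i, (T i).IsSymmetric)
    (ha : a ∈ normalConeAt (compressedJNR T ⊤) p) : supportFace (compressedJNR T ⊤) p a =
      compressedJNR T (LinearMap.ker (shiftedPencil T p a)) := by
  rw [supportFace_compressedJNR hT ha, Submodule.top_orthogonal_eq_bot, Submodule.comap_bot,
    top_inf_eq]

theorem shiftedPencil_apply_mem_orthogonal (hT : ∀ i, (T i).IsSymmetric) (hMN : M ≤ N)
    (ha : a ∈ normalConeAt (compressedJNR T N) p)
    (hM : ∀ y ∈ compressedJNR T M, (y - p) ⬝ᵥ a = 0) {x : E} (hx : x ∈ M) :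
    shiftedPencil T p a x ∈ Nᗮ := by
  have hneg : -a ∈ normalConeAt (compressedJNR T M) p := mem_normalConeAt.2 fun y hy => by
    rw [dotProduct_neg, hM y hy, neg_zero]
  have hneg' := mem_normalConeAt_compressedJNR.1 hneg x hx
  rw [map_neg, LinearMap.neg_apply, inner_neg_left, map_neg, neg_nonneg] at hneg'
  have hpos := mem_normalConeAt_compressedJNR.1 ha
  exact mem_orthogonal_of_re_inner_eq_zero (isSymmetric_shiftedPencil hT) hpos (hMN hx)
    (hneg'.antisymm (hpos x (hMN hx)))

end JointRange

section JNR

variable {n : Type*} [Fintype n] [DecidableEq n] {k : ℕ}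

theorem wpt_vecMulVec_star (A : Fin k → Matrix n n ℂ) (x : EuclideanSpace ℂ n) :
    wpt A (vecMulVec x (star x.ofLp)) = expectation (fun i => toEuclideanLin (A i)) x := by
  ext i
  rw [wpt, expectation, inner_re_symm, EuclideanSpace.inner_eq_star_dotProduct,
    ofLp_toLpLin, toLin'_apply, vecMulVec_mul, trace_vecMulVec, dotProduct_comm,
    ← dotProduct_mulVec, dotProduct_comm]
  rfl

theorem eq_sum_eigenvalues_smul_vecMulVec {ρ : Matrix n n ℂ} (hρ : ρ.IsHermitian) :
    ρ = ∑ j, hρ.eigenvalues j •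
      vecMulVec (hρ.eigenvectorBasis j) (star (hρ.eigenvectorBasis j).ofLp) := by
  ext i l
  conv_lhs => rw [hρ.spectral_theorem]
  rw [Unitary.conjStarAlgAut_apply, mul_apply, Matrix.sum_apply]
  refine Finset.sum_congr rfl fun j _ => ?_
  rw [mul_diagonal, Matrix.smul_apply, vecMulVec_apply, star_apply, hρ.eigenvectorUnitary_apply,
    hρ.eigenvectorUnitary_apply, mul_right_comm, mul_comm]
  rfl

theorem JNR_eq_compressedJNR_top (A : Fin k → Matrix n n ℂ) :
    JNR A = compressedJNR (fun i => toEuclideanLin (A i)) ⊤ := by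
  refine Set.Subset.antisymm ?_ (convexHull_min ?_ (convex_JNR A))
  · rintro _ ⟨ρ, ⟨hρ, htr⟩, rfl⟩
    rw [eq_sum_eigenvalues_smul_vecMulVec hρ.1, ← (isLinearMap_wpt A).mk'_apply, map_sum]
    simp only [map_smul, IsLinearMap.mk'_apply, wpt_vecMulVec_star]
    refine convex_compressedJNR.sum_mem (fun j _ => hρ.eigenvalues_nonneg j) ?_ fun j _ =>
      subset_convexHull ℝ _ (Set.mem_image_of_mem _
        ⟨Submodule.mem_top, hρ.1.eigenvectorBasis.norm_eq_one j⟩)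
    rw [hρ.1.trace_eq_sum_eigenvalues, ← RCLike.ofReal_sum] at htr
    exact RCLike.ofReal_injective (htr.trans RCLike.ofReal_one.symm)
  · rintro _ ⟨x, ⟨-, hx⟩, rfl⟩
    exact ⟨_, isDensity_vecMulVec_star hx, wpt_vecMulVec_star A x⟩

end JNR

section CornerPoints

variable {E : Type*} [NormedAddCommGroup E] [InnerProductSpace ℂ E] {k : ℕ}
  {T : Fin k → E →ₗ[ℂ] E} {p u v w : Fin k → ℝ}

theorem exists_pos_add_smul_mem_normalConeAt [FiniteDimensional ℂ E]
    (hT : ∀ i, (T i).IsSymmetric)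
    (hu : u ∈ normalConeAt (compressedJNR T ⊤) p) (hv : v ∈ normalConeAt (compressedJNR T ⊤) p)
    (hker : LinearMap.ker (shiftedPencil T p u) ⊓ LinearMap.ker (shiftedPencil T p v) ≤
      LinearMap.ker (shiftedPencil T p w)) :
    ∃ ε : ℝ, 0 < ε ∧ u + v + ε • w ∈ normalConeAt (compressedJNR T ⊤) p := by
  simp only [← isPositive_shiftedPencil_iff hT, map_add, map_smul] at hu hv ⊢
  rw [← ker_add_of_isPositive hu hv] at hker
  exact exists_pos_isPositive_add_smul (hu.add hv) (isSymmetric_shiftedPencil hT) hker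

theorem isCornerPoint_of_ker_shiftedPencil_le [FiniteDimensional ℂ E]
    (hT : ∀ i, (T i).IsSymmetric)
    (hp : p ∈ compressedJNR T ⊤) (hu : u ∈ normalConeAt (compressedJNR T ⊤) p)
    (hv : v ∈ normalConeAt (compressedJNR T ⊤) p)
    (hker : LinearMap.ker (shiftedPencil T p u) ⊓ LinearMap.ker (shiftedPencil T p v) ≤
      LinearMap.ker (shiftedPencil T p w))
    (hspan : ∀ x, x ⬝ᵥ u = 0 → x ⬝ᵥ v = 0 → x ⬝ᵥ w = 0 → x = 0) :
    IsCornerPoint (compressedJNR T ⊤) p := by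
  obtain ⟨ε, hε, hw⟩ := exists_pos_add_smul_mem_normalConeAt hT hu hv hker
  refine ⟨hp, span_eq_top_of_dotProduct_eq_zero fun x hx => hspan x (hx u hu) (hx v hv) ?_⟩
  have hxw := hx _ hw
  rw [dotProduct_add, dotProduct_add, hx u hu, hx v hv, add_zero, zero_add, dotProduct_smul] at hxw
  exact (smul_eq_zero.1 hxw).resolve_left hε.ne'

theorem sup_eq_top_of_lt_of_lt_of_finrank_eq_four {𝕜 V : Type*} [DivisionRing 𝕜] [AddCommGroup V]
    [Module 𝕜 V] (hV : Module.finrank 𝕜 V = 4) {K L R : Submodule 𝕜 V} (hKL : K ⊓ L ≠ ⊥)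
    (hR : K ⊓ L < R) (hRK : R < K) (hLK : ¬L ≤ K) : K ⊔ L = ⊤ := by
  have := Module.finite_of_finrank_eq_succ hV
  have h₁ := Submodule.finrank_lt_finrank_of_lt hKL.bot_lt
  have h₂ := Submodule.finrank_lt_finrank_of_lt hR
  have h₃ := Submodule.finrank_lt_finrank_of_lt hRK
  have h₄ := Submodule.finrank_lt_finrank_of_lt (left_lt_sup.2 hLK)
  have h₅ := Submodule.finrank_le (K ⊔ L)
  exact Submodule.eq_top_of_finrank_eq (by omega)

theorem shiftedPencil_apply_mem_orthogonal_of_collinear (hT : ∀ i, (T i).IsSymmetric)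
    {L : Submodule ℂ E} (hL : Collinear ℝ (compressedJNR T L)) (hp : p ∈ compressedJNR T L)
    (hLu : ¬∀ x ∈ compressedJNR T L, (x - p) ⬝ᵥ u = 0) {e : E} (he : e ∈ L)
    (heu : e ∈ LinearMap.ker (shiftedPencil T p u)) : shiftedPencil T p w e ∈ Lᗮ := by
  obtain ⟨b, c, hb, hbc⟩ := exists_smul_sub_smul_orthogonal hL hp hLu w
  have hmem := shiftedPencil_apply_mem_orthogonal hT le_rfl
    (mem_normalConeAt.2 fun y hy => (hbc y hy).ge) hbc he
  rw [map_sub, map_smul, map_smul, LinearMap.sub_apply, LinearMap.smul_apply,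
    LinearMap.smul_apply, LinearMap.mem_ker.1 heu, smul_zero, sub_zero, ← Complex.coe_smul] at hmem
  exact (Lᗮ.smul_mem_iff (Complex.ofReal_ne_zero.2 hb)).1 hmem

theorem ker_shiftedPencil_inf_le (hE : Module.finrank ℂ E = 4) (hT : ∀ i, (T i).IsSymmetric)
    {H F : Set (Fin k → ℝ)} {L : Submodule ℂ E} (hu : u ∈ normalConeAt (compressedJNR T ⊤) p)
    (hH : H = supportFace (compressedJNR T ⊤) p u) (hw : w ∈ normalConeAt H p)
    (hF : F = supportFace H p w) (hFH : F ≠ H) (hL : Collinear ℝ (compressedJNR T L))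
    (hp : p ∈ compressedJNR T L) (hLH : ¬compressedJNR T L ⊆ H) (hFL : ¬F ⊆ compressedJNR T L) :
    LinearMap.ker (shiftedPencil T p u) ⊓ L ≤ LinearMap.ker (shiftedPencil T p w) := by
  have hLW : compressedJNR T L ⊆ compressedJNR T ⊤ := compressedJNR_mono le_top
  have hLu : ¬∀ x ∈ compressedJNR T L, (x - p) ⬝ᵥ u = 0 := fun h =>
    hLH fun x hx => hH ▸ ⟨hLW hx, h x hx⟩
  have hHL : H ∩ compressedJNR T L = {p} :=
    (hH ▸ isFaceOf_supportFace convex_compressedJNR hu).inter_eq_singleton_of_collinear hLW hL hLH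
      (hH ▸ mem_supportFace_self (hLW hp)) hp
  rw [supportFace_compressedJNR_top hT hu] at hH
  set K := LinearMap.ker (shiftedPencil T p u)
  subst hH
  rw [supportFace_compressedJNR hT hw] at hF
  subst hF
  have hvanish : ∀ y ∈ compressedJNR T (K ⊓ L), (y - p) ⬝ᵥ w = 0 := fun y hy => by
    obtain rfl : y = p :=
      hHL.le ⟨compressedJNR_mono inf_le_left hy, compressedJNR_mono inf_le_right hy⟩
    rw [sub_self, zero_dotProduct]
  have hperpK : ∀ e ∈ K ⊓ L, shiftedPencil T p w e ∈ Kᗮ := fun e he =>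
    shiftedPencil_apply_mem_orthogonal hT inf_le_left hw hvanish he
  have hperpL : ∀ e ∈ K ⊓ L, shiftedPencil T p w e ∈ Lᗮ := fun e he =>
    shiftedPencil_apply_mem_orthogonal_of_collinear hT hL hp hLu he.2 he.1
  obtain hbot | hbot := eq_or_ne (K ⊓ L) ⊥
  · exact hbot ▸ bot_le
  have hlt : K ⊓ L < K ⊓ Kᗮ.comap (shiftedPencil T p w) :=
    lt_of_le_of_ne (fun e he => ⟨he.1, hperpK e he⟩) fun h =>
      hFL (h ▸ compressedJNR_mono inf_le_right)
  have htop : K ⊔ L = ⊤ := sup_eq_top_of_lt_of_lt_of_finrank_eq_four hE hbot hlt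
    (inf_le_left.lt_of_ne fun h => hFH (congrArg (compressedJNR T) h))
    fun hLK => hLH (compressedJNR_mono hLK)
  intro e he
  have hperp : shiftedPencil T p w e ∈ (K ⊔ L)ᗮ :=
    Submodule.inf_orthogonal K L ▸ ⟨hperpK e he, hperpL e he⟩
  rwa [htop, Submodule.top_orthogonal_eq_bot, Submodule.mem_bot] at hperp

theorem isCornerPoint_of_not_subset_supportFace {T : Fin 3 → E →ₗ[ℂ] E} {p u : Fin 3 → ℝ}
    {F G : Set (Fin 3 → ℝ)} (hE : Module.finrank ℂ E = 4) (hT : ∀ i, (T i).IsSymmetric)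
    (hu : u ∈ normalConeAt (compressedJNR T ⊤) p) (hu0 : u ≠ 0)
    (hF : IsFaceOf (supportFace (compressedJNR T ⊤) p u) F) (hFc : Collinear ℝ F)
    (hFnt : F.Nontrivial) (hFH : F ≠ supportFace (compressedJNR T ⊤) p u)
    (hG : IsExposedFace (compressedJNR T ⊤) G) (hGc : Collinear ℝ G)
    (hGH : ¬G ⊆ supportFace (compressedJNR T ⊤) p u) (hFG : F ∩ G = {p}) :
    IsCornerPoint (compressedJNR T ⊤) p := by
  obtain ⟨hpF, hpG⟩ : p ∈ F ∩ G := hFG.ge rfl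
  obtain ⟨q, hqF, hqp⟩ := hFnt.exists_ne p
  have hqG : q ∉ G := fun hqG => hqp (hFG.le ⟨hqF, hqG⟩)
  obtain ⟨v, hv, rfl⟩ := (isExposedFace_iff_of_mem hpG).1 hG
  obtain ⟨w, hw, hFw, hline⟩ := hF.exists_eq_supportFace_of_planar
    (isFaceOf_supportFace convex_compressedJNR hu).1 hu0 (fun _ hx => hx.2) hFc hpF hqF hqp.symm hFH
  have := Module.finite_of_finrank_eq_succ hE
  refine isCornerPoint_of_ker_shiftedPencil_le hT hpG.1 hu hv (w := w) ?_ fun x hxu hxv hxw => ?_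
  · rw [supportFace_compressedJNR_top hT hv] at hGc hpG hGH hqG
    exact ker_shiftedPencil_inf_le hE hT hu rfl hw hFw hFH hGc hpG hGH fun h => hqG (h hqF)
  · obtain ⟨t, rfl⟩ := hline x hxu hxw
    rw [smul_dotProduct] at hxv
    rw [(smul_eq_zero.1 hxv).resolve_right fun h => hqG ⟨(hF.2.subset hqF).1, h⟩, zero_smul]

end CornerPoints

/-- if a one-dimensional nonexposed face `F₂` of `W` meets a
one-dimensional exposed face `G` of `W` in the point `p`, then `p` is a corner
point of `W` or both `F₂` and `G` lie in a common non-elliptic face of `W`. -/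
theorem stmt7 (A : Fin 3 → Matrix (Fin 4) (Fin 4) ℂ)
    (hA : ∀ i, (A i).IsHermitian)
    (hdim : convDim (JNR A) = 3)
    (F₂ G : Set (Fin 3 → ℝ)) (p : Fin 3 → ℝ)
    (hF₂ : IsFaceOf (JNR A) F₂) (hF₂d : convDim F₂ = 1)
    (hF₂ne : ¬ IsExposedFace (JNR A) F₂)
    (hG : IsExposedFace (JNR A) G) (hGd : convDim G = 1)
    (hp : F₂ ∩ G = {p}) :
    IsCornerPoint (JNR A) p ∨
      ∃ H, IsNonEllipticFace (JNR A) H ∧ F₂ ⊆ H ∧ G ⊆ H := by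
  rw [JNR_eq_compressedJNR_top] at *
  have hT : ∀ i, (toEuclideanLin (A i)).IsSymmetric := fun i =>
    isSymmetric_toEuclideanLin_iff.2 (hA i)
  have hpF : p ∈ F₂ := (hp.ge rfl).1
  have hF₂nt : F₂.Nontrivial := nontrivial_of_convDim_ne_zero (by omega)
  have hint := interior_nonempty_of_convDim_eq_finrank convex_compressedJNR
    ⟨p, hF₂.2.subset hpF⟩ (hdim.trans (Module.finrank_fin_fun ℝ).symm)
  obtain ⟨u, hu, hu0, hF₂u, hne⟩ :=
    hF₂.exists_ne_supportFace_of_not_isExposedFace convex_compressedJNR hint hF₂ne hpF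
  by_cases hGu : G ⊆ supportFace (compressedJNR (fun i => toEuclideanLin (A i)) ⊤) p u
  · exact .inr ⟨_, isNonEllipticFace_supportFace convex_compressedJNR hu hu0 hF₂u hF₂nt hne,
      hF₂u.2.subset, hGu⟩
  · exact .inl (isCornerPoint_of_not_subset_supportFace finrank_euclideanSpace_fin hT hu hu0 hF₂u
      (collinear_of_convDim_eq_one hF₂d) hF₂nt hne hG (collinear_of_convDim_eq_one hGd) hGu hp)
end
end
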